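/- arXiv:1401.7698 — 2 statements merged into one kernel-verified Lean document; each statement's English description precedes it below -/
import Mathlib

section
/- Let A, V : ℝ × ℝ³ → ℝ³ and φ : ℝ × ℝ³ → ℝ be smooth, and suppose there is a compact set K ⊆ ℝ³ such that A(t,·) vanishes outside K for every t. Assume ∂ₜA = V×(∇×A) − ∇φ for all (t,x). Then the magnetic helicity t ↦ ∫_{ℝ³} A(t,x)·(∇×A)(t,x) dx is constant in t. -/
open MeasureTheory

/-- `i`-th spatial partial derivative of a scalar field on ℝ³. -/
noncomputable def pd3 (i : Fin 3) (f : (Fin 3 → ℝ) → ℝ) (x : Fin 3 → ℝ) : ℝ :=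
  fderiv ℝ f x (Pi.single i 1)

/-- Gradient of a scalar field on ℝ³. -/
noncomputable def grad3 (f : (Fin 3 → ℝ) → ℝ) (x : Fin 3 → ℝ) : Fin 3 → ℝ :=
  fun i => pd3 i f x

/-- Divergence of a vector field on ℝ³. -/
noncomputable def div3 (F : (Fin 3 → ℝ) → (Fin 3 → ℝ)) (x : Fin 3 → ℝ) : ℝ :=
  ∑ i, pd3 i (fun y => F y i) x

/-- Curl of a vector field on ℝ³. -/
noncomputable def curl3 (F : (Fin 3 → ℝ) → (Fin 3 → ℝ)) (x : Fin 3 → ℝ) : Fin 3 → ℝ :=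
  ![pd3 1 (fun y => F y 2) x - pd3 2 (fun y => F y 1) x,
    pd3 2 (fun y => F y 0) x - pd3 0 (fun y => F y 2) x,
    pd3 0 (fun y => F y 1) x - pd3 1 (fun y => F y 0) x]

/-- Cross product on ℝ³. -/
def cross3 (a b : Fin 3 → ℝ) : Fin 3 → ℝ :=
  ![a 1 * b 2 - a 2 * b 1, a 2 * b 0 - a 0 * b 2, a 0 * b 1 - a 1 * b 0]

/-- Euclidean dot product on ℝ³. -/
def dot3 (a b : Fin 3 → ℝ) : ℝ := ∑ i, a i * b i

/-!
Write `B = ∇ × A`. Since the curl is symmetric with respect to the `L²` pairing of compactly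
supported fields, the two terms of the product rule contribute equally and
`d/dt ∫ A·B = 2 ∫ ∂ₜA·B`. The induction equation turns the integrand into `(V × B)·B - ∇φ·B`:
the first term vanishes pointwise, and the second is `div (φ B)`, whose integral is zero,
because `div B = 0`.
-/

section Slices

variable {𝕜 E F G : Type*} [NontriviallyNormedField 𝕜]
  [NormedAddCommGroup E] [NormedSpace 𝕜 E] [NormedAddCommGroup F] [NormedSpace 𝕜 F]
  [NormedAddCommGroup G] [NormedSpace 𝕜 G]

theorem fderiv_comp_prodMk_right {g : E × F → G} {x : E} {y : F}
    (hg : DifferentiableAt 𝕜 g (x, y)) (v : F) :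
    fderiv 𝕜 (fun z => g (x, z)) y v = fderiv 𝕜 g (x, y) (0, v) := by
  have h : HasFDerivAt (fun z => g (x, z)) _ y :=
    hg.hasFDerivAt.comp y (hasFDerivAt_prodMk_right x y)
  simp [h.fderiv]

theorem hasDerivAt_comp_prodMk_left {g : 𝕜 × F → G} {t : 𝕜} {y : F}
    (hg : DifferentiableAt 𝕜 g (t, y)) :
    HasDerivAt (fun τ => g (τ, y)) (fderiv 𝕜 g (t, y) (1, 0)) t := by
  simpa using! (hg.hasFDerivAt.comp t (hasFDerivAt_prodMk_left t y)).hasDerivAt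

theorem fderiv_fderiv_apply_comm [IsRCLikeNormedField 𝕜] {f : E → G} {x : E}
    (hf : ContDiffAt 𝕜 2 f x) (v w : E) :
    fderiv 𝕜 (fun y => fderiv 𝕜 f y v) x w = fderiv 𝕜 (fun y => fderiv 𝕜 f y w) x v := by
  have hd : DifferentiableAt 𝕜 (fderiv 𝕜 f) x :=
    (hf.fderiv_right (m := 1) (by norm_num)).differentiableAt one_ne_zero
  rw [fderiv_clm_apply hd (by fun_prop), fderiv_clm_apply hd (by fun_prop)]
  simpa using hf.isSymmSndFDerivAt (by simp) w v

theorem hasDerivAt_fderiv_apply [IsRCLikeNormedField 𝕜] {f : 𝕜 → F → G}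
    (hf : ContDiff 𝕜 2 (fun p : 𝕜 × F => f p.1 p.2)) (t : 𝕜) (x v : F) :
    HasDerivAt (fun τ => fderiv 𝕜 (f τ) x v)
      (fderiv 𝕜 (fun y => deriv (fun τ => f τ y) t) x v) t := by
  set g : 𝕜 × F → G := fun p => f p.1 p.2
  have hg (p : 𝕜 × F) : DifferentiableAt 𝕜 g p := hf.differentiable two_ne_zero p
  have hg' (w p : 𝕜 × F) : DifferentiableAt 𝕜 (fun q => fderiv 𝕜 g q w) p :=
    ((hf.fderiv_right (m := 1) (by norm_num)).clm_apply contDiff_const).differentiable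
      one_ne_zero p
  have space_deriv (τ : 𝕜) : fderiv 𝕜 (f τ) x v = fderiv 𝕜 g (τ, x) (0, v) :=
    fderiv_comp_prodMk_right (hg _) v
  have time_deriv (y : F) : deriv (fun τ => f τ y) t = fderiv 𝕜 g (t, y) (1, 0) :=
    (hasDerivAt_comp_prodMk_left (hg _)).deriv
  simp_rw [space_deriv, time_deriv]
  rw [fderiv_comp_prodMk_right (hg' _ _), fderiv_fderiv_apply_comm hf.contDiffAt]
  exact hasDerivAt_comp_prodMk_left (hg' _ _)

theorem contDiff_deriv_left {f : 𝕜 → F → G} {m n : WithTop ℕ∞}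
    (hf : ContDiff 𝕜 m (fun p : 𝕜 × F => f p.1 p.2)) (hnm : n + 1 ≤ m) :
    ContDiff 𝕜 n (fun p : 𝕜 × F => deriv (fun τ => f τ p.2) p.1) := by
  simp_rw [← fderiv_apply_one_eq_deriv]
  refine ContDiff.fderiv_apply (f := fun (p : 𝕜 × F) τ => f τ p.2) ?_ contDiff_fst
    contDiff_const hnm
  exact hf.comp (contDiff_snd.prodMk (contDiff_snd.comp contDiff_fst))

theorem contDiff_slice {f : E → F → G} {n : WithTop ℕ∞}
    (hf : ContDiff 𝕜 n (fun p : E × F => f p.1 p.2)) (x : E) : ContDiff 𝕜 n (f x) :=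
  hf.comp (contDiff_prodMk_right x)

end Slices

section Integration

theorem integral_fderiv_apply_eq_zero {E F : Type*} [NormedAddCommGroup E] [NormedSpace ℝ E]
    [FiniteDimensional ℝ E] [MeasurableSpace E] [BorelSpace E] {μ : Measure E}
    [μ.IsAddHaarMeasure] [NormedAddCommGroup F] [NormedSpace ℝ F] {f : E → F}
    (hf : ContDiff ℝ 1 f) (hc : HasCompactSupport f) (v : E) :
    ∫ x, fderiv ℝ f x v ∂μ = 0 := by
  have hf' : Integrable (fun x => fderiv ℝ f x v) μ :=
    ((hf.continuous_fderiv one_ne_zero).clm_apply continuous_const).integrable_of_hasCompactSupport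
      (hc.fderiv_apply (𝕜 := ℝ) v)
  simpa using integral_smul_fderiv_eq_neg_fderiv_smul_of_integrable (μ := μ)
    (f := fun _ => (1 : ℝ)) (g := f) (v := v) (by simp) (by simpa using hf')
    (by simpa using hf.continuous.integrable_of_hasCompactSupport hc)
    (fun _ _ => by fun_prop) (fun x _ => hf.differentiable one_ne_zero x)

theorem hasDerivAt_integral_of_compactSupport {X G : Type*} [TopologicalSpace X] [T2Space X]
    [MeasurableSpace X] [OpensMeasurableSpace X] {μ : Measure X} [IsFiniteMeasureOnCompacts μ]
    [NormedAddCommGroup G] [NormedSpace ℝ G] {f f' : ℝ → X → G} {K : Set X} (hK : IsCompact K)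
    (hf : ∀ t, Continuous (f t)) (hf' : Continuous (fun p : ℝ × X => f' p.1 p.2))
    (hderiv : ∀ t x, HasDerivAt (fun τ => f τ x) (f' t x) t)
    (hsupp : ∀ t, ∀ x ∉ K, f t x = 0) (t : ℝ) :
    HasDerivAt (fun τ => ∫ x, f τ x ∂μ) (∫ x, f' t x ∂μ) t := by
  have hsupp' (s : ℝ) (x : X) (hx : x ∉ K) : f' s x = 0 := by
    refine (hderiv s x).unique ?_
    simpa only [hsupp _ x hx] using hasDerivAt_const s (0 : G)
  have hint (s : ℝ) : Integrable (f s) μ :=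
    (hf s).integrable_of_hasCompactSupport (HasCompactSupport.intro hK (hsupp s))
  have hint' : Integrable (f' t) μ :=
    (hf'.comp (Continuous.prodMk_right t)).integrable_of_hasCompactSupport
      (HasCompactSupport.intro hK (hsupp' t))
  obtain ⟨C, hC⟩ := ((isCompact_closedBall t 1).prod hK).exists_bound_of_continuousOn
    hf'.continuousOn
  have hbound (x : X) (s : ℝ) (hs : s ∈ Metric.closedBall t 1) :
      ‖f' s x‖ ≤ K.indicator (fun _ => C) x := by
    by_cases hx : x ∈ K
    · simpa [hx] using hC (s, x) ⟨hs, hx⟩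
    · simp [hx, hsupp']
  exact (hasDerivAt_integral_of_dominated_loc_of_deriv_le
    (Metric.closedBall_mem_nhds t one_pos) (.of_forall fun s => (hint s).aestronglyMeasurable)
    (hint t) hint'.aestronglyMeasurable (.of_forall hbound)
    ((integrable_indicator_iff hK.measurableSet).2 (integrableOn_const hK.measure_lt_top.ne))
    (.of_forall fun x s _ => hderiv s x)).2

end Integration

section VectorCalculus

variable {f g : (Fin 3 → ℝ) → ℝ} {F G : (Fin 3 → ℝ) → (Fin 3 → ℝ)} {x : Fin 3 → ℝ}

theorem pd3_sub (hf : DifferentiableAt ℝ f x) (hg : DifferentiableAt ℝ g x) (i : Fin 3) :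
    pd3 i (fun y => f y - g y) x = pd3 i f x - pd3 i g x := by
  simp [pd3, fderiv_fun_sub hf hg]

theorem pd3_mul (hf : DifferentiableAt ℝ f x) (hg : DifferentiableAt ℝ g x) (i : Fin 3) :
    pd3 i (fun y => f y * g y) x = f x * pd3 i g x + g x * pd3 i f x := by
  simp [pd3, fderiv_fun_mul hf hg]

theorem differentiableAt_pd3 (hf : ContDiffAt ℝ 2 f x) (i : Fin 3) :
    DifferentiableAt ℝ (pd3 i f) x :=
  ((hf.fderiv_right (m := 1) (by norm_num)).clm_apply contDiffAt_const).differentiableAt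
    one_ne_zero

theorem pd3_comm (hf : ContDiffAt ℝ 2 f x) (i j : Fin 3) :
    pd3 i (pd3 j f) x = pd3 j (pd3 i f) x :=
  fderiv_fderiv_apply_comm hf _ _

theorem div3_smul (hf : DifferentiableAt ℝ f x) (hF : DifferentiableAt ℝ F x) :
    div3 (fun y => f y • F y) x = dot3 (grad3 f x) (F x) + f x * div3 F x := by
  have hF := differentiableAt_pi.1 hF
  simp only [div3, dot3, grad3, Pi.smul_apply, smul_eq_mul, pd3_mul hf (hF _), Finset.mul_sum,
    ← Finset.sum_add_distrib]
  exact Finset.sum_congr rfl fun i _ => by ring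

theorem div3_cross3 (hF : DifferentiableAt ℝ F x) (hG : DifferentiableAt ℝ G x) :
    div3 (fun y => cross3 (F y) (G y)) x =
      dot3 (curl3 F x) (G x) - dot3 (F x) (curl3 G x) := by
  have hF := differentiableAt_pi.1 hF
  have hG := differentiableAt_pi.1 hG
  have pd3_minor (i j k : Fin 3) : pd3 i (fun y => F y j * G y k - F y k * G y j) x =
      F x j * pd3 i (fun y => G y k) x + G x k * pd3 i (fun y => F y j) x -
        (F x k * pd3 i (fun y => G y j) x + G x j * pd3 i (fun y => F y k) x) := by
    rw [pd3_sub ((hF j).fun_mul (hG k)) ((hF k).fun_mul (hG j)), pd3_mul (hF j) (hG k),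
      pd3_mul (hF k) (hG j)]
  simp only [div3, cross3, dot3, curl3, Fin.sum_univ_three, Matrix.cons_val, pd3_minor]
  ring

theorem div3_curl3 (hF : ContDiffAt ℝ 2 F x) : div3 (curl3 F) x = 0 := by
  have hF := contDiffAt_pi.1 hF
  have pd3_curl (i j k : Fin 3) :
      pd3 i (fun y => pd3 j (fun z => F z k) y - pd3 k (fun z => F z j) y) x =
        pd3 i (pd3 j fun z => F z k) x - pd3 i (pd3 k fun z => F z j) x :=
    pd3_sub (differentiableAt_pd3 (hF k) j) (differentiableAt_pd3 (hF j) k) i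
  simp only [div3, curl3, Fin.sum_univ_three, Matrix.cons_val, pd3_curl]
  rw [pd3_comm (hF 2) 1 0, pd3_comm (hF 1) 2 0, pd3_comm (hF 0) 2 1]
  ring

theorem dot3_comm (a b : Fin 3 → ℝ) : dot3 a b = dot3 b a := dotProduct_comm a b

theorem sub_dot3 (a b c : Fin 3 → ℝ) : dot3 (a - b) c = dot3 a c - dot3 b c :=
  sub_dotProduct a b c

theorem dot3_cross3_self_right (a b : Fin 3 → ℝ) : dot3 (cross3 a b) b = 0 := by
  simp only [dot3, cross3, Fin.sum_univ_three, Matrix.cons_val]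
  ring

section Regularity

variable {E : Type*} [NormedAddCommGroup E] [NormedSpace ℝ E] {m n : WithTop ℕ∞}

theorem continuous_dot3 {X : Type*} [TopologicalSpace X] {u v : X → Fin 3 → ℝ}
    (hu : Continuous u) (hv : Continuous v) : Continuous (fun p => dot3 (u p) (v p)) :=
  hu.dotProduct hv

theorem contDiff_cross3 {u v : E → Fin 3 → ℝ} (hu : ContDiff ℝ n u) (hv : ContDiff ℝ n v) :
    ContDiff ℝ n (fun p => cross3 (u p) (v p)) := by
  have hu := contDiff_pi.1 hu
  have hv := contDiff_pi.1 hv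
  refine contDiff_pi.2 fun i => ?_
  fin_cases i <;> exact ((hu _).mul (hv _)).sub ((hu _).mul (hv _))

theorem contDiff_curl3_param {u : E → (Fin 3 → ℝ) → (Fin 3 → ℝ)} {v : E → Fin 3 → ℝ}
    (hu : ContDiff ℝ m (fun p : E × (Fin 3 → ℝ) => u p.1 p.2)) (hv : ContDiff ℝ n v)
    (hnm : n + 1 ≤ m) : ContDiff ℝ n (fun p => curl3 (u p) (v p)) := by
  have hpd (i j : Fin 3) : ContDiff ℝ n (fun p => pd3 i (fun y => u p y j) (v p)) :=
    ContDiff.fderiv_apply (f := fun p y => u p y j) (contDiff_pi.1 hu j) hv contDiff_const hnm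
  refine contDiff_pi.2 fun i => ?_
  fin_cases i <;> exact (hpd _ _).sub (hpd _ _)

theorem continuous_curl3_param {u : E → (Fin 3 → ℝ) → (Fin 3 → ℝ)}
    (hu : ContDiff ℝ 1 (fun p : E × (Fin 3 → ℝ) => u p.1 p.2)) :
    Continuous (fun p : E × (Fin 3 → ℝ) => curl3 (u p.1) p.2) := by
  refine (contDiff_curl3_param (u := fun (p : E × (Fin 3 → ℝ)) y => u p.1 y) (m := 1) (n := 0)
    ?_ contDiff_snd (by simp)).continuous
  exact hu.comp ((contDiff_fst.comp contDiff_fst).prodMk contDiff_snd)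

theorem contDiff_curl3 (hF : ContDiff ℝ m F) (hnm : n + 1 ≤ m) : ContDiff ℝ n (curl3 F) :=
  contDiff_curl3_param (u := fun _ => F) (hF.comp contDiff_snd) contDiff_id hnm

theorem continuous_curl3 (hF : ContDiff ℝ 1 F) : Continuous (curl3 F) :=
  (contDiff_curl3 hF (n := 0) (by simp)).continuous

end Regularity

theorem curl3_eq_zero_of_notMem_tsupport (hx : x ∉ tsupport F) : curl3 F x = 0 := by
  have hpd (i j : Fin 3) : pd3 i (fun y => F y j) x = 0 := by
    have hF : (fun y => F y j) =ᶠ[nhds x] fun _ => 0 :=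
      (notMem_tsupport_iff_eventuallyEq.1 hx).fun_comp (· j)
    simp [pd3, hF.fderiv_eq]
  ext i
  fin_cases i <;> simp [curl3, hpd]

theorem hasCompactSupport_curl3 (hc : HasCompactSupport F) : HasCompactSupport (curl3 F) :=
  hc.mono' fun _ hx => not_imp_comm.1 curl3_eq_zero_of_notMem_tsupport hx

theorem integrable_dot3 (hF : Continuous F) (hG : Continuous G) (hc : HasCompactSupport F) :
    Integrable (fun x => dot3 (F x) (G x)) :=
  (continuous_dot3 hF hG).integrable_of_hasCompactSupport
    (hc.mono fun x hx hFx => hx (by simp [dot3, hFx]))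

theorem integral_div3_eq_zero (hF : ContDiff ℝ 1 F) (hc : HasCompactSupport F) :
    ∫ x, div3 F x = 0 := by
  have hF (i : Fin 3) : ContDiff ℝ 1 (fun x => F x i) := contDiff_pi.1 hF i
  have hc (i : Fin 3) : HasCompactSupport (fun x => F x i) :=
    hc.comp_left (g := fun a : Fin 3 → ℝ => a i) rfl
  have hint (i : Fin 3) : Integrable (pd3 i fun x => F x i) :=
    (((hF i).continuous_fderiv one_ne_zero).clm_apply
      continuous_const).integrable_of_hasCompactSupport ((hc i).fderiv_apply (𝕜 := ℝ) _)
  simp only [div3]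
  rw [integral_finsetSum _ fun i _ => hint i]
  exact Finset.sum_eq_zero fun i _ => integral_fderiv_apply_eq_zero (hF i) (hc i) _

theorem integral_dot3_curl3_comm (hF : ContDiff ℝ 1 F) (hG : ContDiff ℝ 1 G)
    (hc : HasCompactSupport F) :
    ∫ x, dot3 (F x) (curl3 G x) = ∫ x, dot3 (curl3 F x) (G x) := by
  have hcurlF : Continuous (curl3 F) := continuous_curl3 hF
  have hcurlG : Continuous (curl3 G) := continuous_curl3 hG
  have hcross : HasCompactSupport (fun x => cross3 (F x) (G x)) :=
    hc.mono fun x hx hFx => hx (by ext i; fin_cases i <;> simp [cross3, hFx])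
  have hdiv : ∫ x, div3 (fun y => cross3 (F y) (G y)) x = 0 :=
    integral_div3_eq_zero (contDiff_cross3 hF hG) hcross
  simp_rw [fun x => div3_cross3 (hF.differentiable one_ne_zero x)
    (hG.differentiable one_ne_zero x)] at hdiv
  rw [integral_sub (integrable_dot3 hcurlF hG.continuous (hasCompactSupport_curl3 hc))
    (integrable_dot3 hF.continuous hcurlG hc)] at hdiv
  exact (sub_eq_zero.1 hdiv).symm

theorem integral_dot3_curl3_add_swap (hF : ContDiff ℝ 1 F) (hG : ContDiff ℝ 1 G)
    (hc : HasCompactSupport F) :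
    ∫ x, (dot3 (G x) (curl3 F x) + dot3 (F x) (curl3 G x)) =
      2 * ∫ x, dot3 (G x) (curl3 F x) := by
  have hcurlF : Continuous (curl3 F) := continuous_curl3 hF
  have hcurlG : Continuous (curl3 G) := continuous_curl3 hG
  simp_rw [fun x => dot3_comm (G x) (curl3 F x)]
  rw [integral_add (integrable_dot3 hcurlF hG.continuous (hasCompactSupport_curl3 hc))
    (integrable_dot3 hF.continuous hcurlG hc), integral_dot3_curl3_comm hF hG hc, two_mul]

theorem integral_dot3_grad3_curl3_eq_zero (hf : ContDiff ℝ 1 f) (hF : ContDiff ℝ 2 F)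
    (hc : HasCompactSupport F) : ∫ x, dot3 (grad3 f x) (curl3 F x) = 0 := by
  have hcurl : ContDiff ℝ 1 (curl3 F) := contDiff_curl3 hF (by norm_num)
  have hdiv (x : Fin 3 → ℝ) :
      div3 (fun y => f y • curl3 F y) x = dot3 (grad3 f x) (curl3 F x) := by
    rw [div3_smul (hf.differentiable one_ne_zero x) (hcurl.differentiable one_ne_zero x),
      div3_curl3 hF.contDiffAt, mul_zero, add_zero]
  have hc' : HasCompactSupport (f • curl3 F) := (hasCompactSupport_curl3 hc).smul_left
  calc ∫ x, dot3 (grad3 f x) (curl3 F x)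
      = ∫ x, div3 (f • curl3 F) x := (integral_congr_ae (.of_forall hdiv)).symm
    _ = 0 := integral_div3_eq_zero (hf.smul hcurl) hc'

end VectorCalculus

section Helicity

/-- The helicity `∫ F·(∇ × F)` of a vector field on ℝ³; for a vector potential `F = A` this is
the magnetic helicity of `B = ∇ × A`, twice the Casimir element `C₂`. It is the junk value `0` if
the integrand is not integrable. -/
noncomputable def helicity (F : (Fin 3 → ℝ) → (Fin 3 → ℝ)) : ℝ :=
  ∫ x, dot3 (F x) (curl3 F x)

theorem hasDerivAt_dot3 {u v : ℝ → Fin 3 → ℝ} {u' v' : Fin 3 → ℝ} {t : ℝ}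
    (hu : HasDerivAt u u' t) (hv : HasDerivAt v v' t) :
    HasDerivAt (fun τ => dot3 (u τ) (v τ)) (dot3 u' (v t) + dot3 (u t) v') t := by
  have h (i : Fin 3) : HasDerivAt (fun τ => u τ i * v τ i) (u' i * v t i + u t i * v' i) t :=
    (hasDerivAt_pi.1 hu i).fun_mul (hasDerivAt_pi.1 hv i)
  simpa only [dot3, Finset.sum_add_distrib] using HasDerivAt.fun_sum fun i _ => h i

variable {A V : ℝ → (Fin 3 → ℝ) → (Fin 3 → ℝ)} {φ : ℝ → (Fin 3 → ℝ) → ℝ} {K : Set (Fin 3 → ℝ)}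

theorem hasDerivAt_curl3 (hA : ContDiff ℝ 2 (fun p : ℝ × (Fin 3 → ℝ) => A p.1 p.2))
    (t : ℝ) (x : Fin 3 → ℝ) :
    HasDerivAt (fun τ => curl3 (A τ) x) (curl3 (fun y => deriv (fun τ => A τ y) t) x) t := by
  have deriv_coord (y : Fin 3 → ℝ) (j : Fin 3) :
      deriv (fun τ => A τ y) t j = deriv (fun τ => A τ y j) t := by
    refine congrFun (deriv_pi fun j => ?_) j
    exact (hasDerivAt_comp_prodMk_left
      ((contDiff_pi.1 hA j).differentiable two_ne_zero (t, y))).differentiableAt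
  have hpd (i j : Fin 3) : HasDerivAt (fun τ => pd3 i (fun y => A τ y j) x)
      (pd3 i (fun y => deriv (fun τ => A τ y) t j) x) t := by
    simp_rw [deriv_coord]
    exact hasDerivAt_fderiv_apply (contDiff_pi.1 hA j) t x _
  refine hasDerivAt_pi.2 fun i => ?_
  fin_cases i <;> exact (hpd _ _).sub (hpd _ _)

theorem hasDerivAt_helicity (hA : ContDiff ℝ 2 (fun p : ℝ × (Fin 3 → ℝ) => A p.1 p.2))
    (hK : IsCompact K) (hsupp : ∀ t, ∀ x ∉ K, A t x = 0) (t : ℝ) :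
    HasDerivAt (fun τ => helicity (A τ))
      (2 * ∫ x, dot3 (deriv (fun τ => A τ x) t) (curl3 (A t) x)) t := by
  let A' (s : ℝ) (x : Fin 3 → ℝ) : Fin 3 → ℝ := deriv (fun τ => A τ x) s
  have hA₁ : ContDiff ℝ 1 (fun p : ℝ × (Fin 3 → ℝ) => A p.1 p.2) := hA.of_le one_le_two
  have hA' : ContDiff ℝ 1 (fun p : ℝ × (Fin 3 → ℝ) => A' p.1 p.2) :=
    contDiff_deriv_left hA (by norm_num)
  have hcurl : Continuous (fun p : ℝ × (Fin 3 → ℝ) => curl3 (A p.1) p.2) :=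
    continuous_curl3_param hA₁
  have hdensity : Continuous (fun p : ℝ × (Fin 3 → ℝ) =>
      dot3 (A p.1 p.2) (curl3 (A p.1) p.2)) :=
    continuous_dot3 hA.continuous hcurl
  have hrate : Continuous (fun p : ℝ × (Fin 3 → ℝ) =>
      dot3 (A' p.1 p.2) (curl3 (A p.1) p.2) + dot3 (A p.1 p.2) (curl3 (A' p.1) p.2)) :=
    (continuous_dot3 hA'.continuous hcurl).add
      (continuous_dot3 hA.continuous (continuous_curl3_param hA'))
  have hderiv (s : ℝ) (x : Fin 3 → ℝ) : HasDerivAt (fun τ => dot3 (A τ x) (curl3 (A τ) x))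
      (dot3 (A' s x) (curl3 (A s) x) + dot3 (A s x) (curl3 (A' s) x)) s :=
    have hAx : HasDerivAt (fun τ => A τ x) _ s :=
      hasDerivAt_comp_prodMk_left (hA.differentiable two_ne_zero (s, x))
    hasDerivAt_dot3 hAx.differentiableAt.hasDerivAt (hasDerivAt_curl3 hA s x)
  have leibniz := hasDerivAt_integral_of_compactSupport (μ := volume) hK
    (fun s => hdensity.comp (.prodMk_right s)) hrate hderiv
    (fun s x hx => by simp [dot3, hsupp s x hx]) t
  rwa [integral_dot3_curl3_add_swap (contDiff_slice hA₁ t) (contDiff_slice hA' t)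
    (.intro hK (hsupp t))] at leibniz

theorem magnetic_helicity_constant_general
    (hA : ContDiff ℝ 2 (fun p : ℝ × (Fin 3 → ℝ) => A p.1 p.2))
    (hφ : ∀ t, ContDiff ℝ 1 (φ t)) (hK : IsCompact K) (hAsupp : ∀ t, ∀ x ∉ K, A t x = 0)
    (hind : ∀ t x, deriv (fun τ => A τ x) t =
      cross3 (V t x) (curl3 (A t) x) - grad3 (φ t) x) (t₁ t₂ : ℝ) :
    helicity (A t₁) = helicity (A t₂) := by
  have rate_eq (t : ℝ) (x : Fin 3 → ℝ) :
      dot3 (deriv (fun τ => A τ x) t) (curl3 (A t) x) =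
        -dot3 (grad3 (φ t) x) (curl3 (A t) x) := by
    rw [hind, sub_dot3, dot3_cross3_self_right, zero_sub]
  have hderiv (t : ℝ) : HasDerivAt (fun τ => helicity (A τ)) 0 t := by
    have h := hasDerivAt_helicity hA hK hAsupp t
    simp_rw [rate_eq] at h
    rwa [integral_neg, integral_dot3_grad3_curl3_eq_zero (hφ t) (contDiff_slice hA t)
      (.intro hK (hAsupp t)), neg_zero, mul_zero] at h
  exact is_const_of_deriv_eq_zero (fun t => (hderiv t).differentiableAt)
    (fun t => (hderiv t).deriv) t₁ t₂

end Helicity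

/-- Conservation of the magnetic helicity `∫ A·(∇×A)` under the uncurled
ideal induction equation `∂ₜA = V×(∇×A) − ∇φ`. -/
theorem magnetic_helicity_constant
    (A V : ℝ → (Fin 3 → ℝ) → (Fin 3 → ℝ))
    (φ : ℝ → (Fin 3 → ℝ) → ℝ)
    (hA : ContDiff ℝ (⊤ : ℕ∞) (fun p : ℝ × (Fin 3 → ℝ) => A p.1 p.2))
    (hV : ContDiff ℝ (⊤ : ℕ∞) (fun p : ℝ × (Fin 3 → ℝ) => V p.1 p.2))
    (hφ : ContDiff ℝ (⊤ : ℕ∞) (fun p : ℝ × (Fin 3 → ℝ) => φ p.1 p.2))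
    (K : Set (Fin 3 → ℝ)) (hK : IsCompact K)
    (hAsupp : ∀ t x, x ∉ K → A t x = 0)
    (hind : ∀ t x, deriv (fun τ => A τ x) t =
      cross3 (V t x) (curl3 (A t) x) - grad3 (φ t) x) :
    ∀ t₁ t₂ : ℝ,
      (∫ x : Fin 3 → ℝ, dot3 (A t₁ x) (curl3 (A t₁) x)) =
        ∫ x : Fin 3 → ℝ, dot3 (A t₂ x) (curl3 (A t₂) x) := by
  exact magnetic_helicity_constant_general (hA.of_le (by norm_cast))
    (fun t => (contDiff_slice hφ t).of_le (by norm_cast)) hK hAsupp hind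
end

section
/- Define the bracket {a,b} := ∂_y a ∂ₓ b − ∂ₓ a ∂_y b for functions on ℝ². Let ω, ψ, φ : ℝ × ℝ² → ℝ be smooth, with ω(t,·) and ψ(t,·) vanishing outside a fixed compact set K ⊆ ℝ² for every t, and suppose that for all (t,x): ∂ₜω + {φ, ω} = {Δψ, ψ} and ∂ₜψ + {φ, ψ} = 0, where Δ is the Laplacian in the spatial variables. Then for every smooth g : ℝ → ℝ, the quantity t ↦ ∫_{ℝ²} ω(t,x) g(ψ(t,x)) dx is constant in t. -/
open MeasureTheory

/-- `i`-th partial derivative of a scalar field on ℝ². -/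
noncomputable def pd2 (i : Fin 2) (f : (Fin 2 → ℝ) → ℝ) (x : Fin 2 → ℝ) : ℝ :=
  fderiv ℝ f x (Pi.single i 1)

/-- Gradient of a scalar field on ℝ². -/
noncomputable def grad2 (f : (Fin 2 → ℝ) → ℝ) (x : Fin 2 → ℝ) : Fin 2 → ℝ :=
  fun i => pd2 i f x

/-- Divergence of a vector field on ℝ². -/
noncomputable def div2 (F : (Fin 2 → ℝ) → (Fin 2 → ℝ)) (x : Fin 2 → ℝ) : ℝ :=
  ∑ i, pd2 i (fun y => F y i) x

/-- The two-dimensional Jacobian (canonical) bracket {a,b} = ∂_y a ∂ₓ b − ∂ₓ a ∂_y b. -/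
noncomputable def jbr (a b : (Fin 2 → ℝ) → ℝ) (x : Fin 2 → ℝ) : ℝ :=
  pd2 1 a x * pd2 0 b x - pd2 0 a x * pd2 1 b x

/-- Laplacian of a scalar field on ℝ². -/
noncomputable def lap2 (f : (Fin 2 → ℝ) → ℝ) (x : Fin 2 → ℝ) : ℝ :=
  pd2 0 (pd2 0 f) x + pd2 1 (pd2 1 f) x

/-!
Since `{ψ, g(ψ)} = 0`, the evolution equations give
`∂ₜ(ω g(ψ)) = -{ψ, Δψ g(ψ)} - {φ, ω g(ψ)}`.
A bracket `{a, b}` is the divergence of `b` times the Hamiltonian vector field of `a`, so both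
terms integrate to zero as soon as one of their entries has compact support.
-/

section Calculus

variable {E F : Type*} [NormedAddCommGroup E] [NormedSpace ℝ E] [NormedAddCommGroup F]
  [NormedSpace ℝ F]

theorem continuous_uncurry_deriv_left {f : ℝ → E → F} (hf : ContDiff ℝ 1 (Function.uncurry f)) :
    Continuous fun p : ℝ × E => deriv (fun s => f s p.2) p.1 := by
  have deriv_eq (p : ℝ × E) :
      deriv (fun s => f s p.2) p.1 = fderiv ℝ (Function.uncurry f) p (1, 0) :=
    ((hf.differentiable one_ne_zero p).hasFDerivAt.comp_hasDerivAt (f := fun s => (s, p.2)) p.1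
      ((hasDerivAt_id p.1).prodMk (hasDerivAt_const p.1 p.2))).deriv
  simpa only [deriv_eq] using (hf.continuous_fderiv one_ne_zero).clm_apply continuous_const

variable [MeasurableSpace E] [BorelSpace E] {μ : Measure E}

theorem integrable_fderiv_apply_of_hasCompactSupport [IsFiniteMeasureOnCompacts μ] {f : E → F}
    (hf : ContDiff ℝ 1 f) (hc : HasCompactSupport f) (v : E) :
    Integrable (fun x => fderiv ℝ f x v) μ :=
  ((hf.continuous_fderiv one_ne_zero).clm_apply continuous_const).integrable_of_hasCompactSupport
    (hc.fderiv_apply (𝕜 := ℝ) v)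

theorem integral_fderiv_apply_eq_zero_of_hasCompactSupport [FiniteDimensional ℝ E]
    [μ.IsAddHaarMeasure] {f : E → F} (hf : ContDiff ℝ 1 f) (hc : HasCompactSupport f) (v : E) :
    ∫ x, fderiv ℝ f x v ∂μ = 0 := by
  have by_parts := integral_smul_fderiv_eq_neg_fderiv_smul_of_integrable (𝕜 := ℝ) (μ := μ)
    (f := fun _ : E => (1 : ℝ)) (g := f) (v := v) (by simp)
    (by simpa using integrable_fderiv_apply_of_hasCompactSupport hf hc v)
    (by simpa using hf.continuous.integrable_of_hasCompactSupport hc)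
    (fun _ _ => differentiableAt_const _) (fun x _ => hf.differentiable one_ne_zero x)
  simpa using by_parts

theorem hasDerivAt_integral_of_contDiff_of_isCompact [IsFiniteMeasureOnCompacts μ]
    {f : ℝ → E → F} (hf : ContDiff ℝ 1 (Function.uncurry f)) {K : Set E} (hK : IsCompact K)
    (hsupp : ∀ t, ∀ x ∉ K, f t x = 0) (t : ℝ) :
    HasDerivAt (fun s => ∫ x, f s x ∂μ) (∫ x, deriv (fun s => f s x) t ∂μ) t := by
  have slice_continuous (s : ℝ) : Continuous (f s) := hf.continuous.comp (.prodMk_right s)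
  have slice_integrable (s : ℝ) : Integrable (f s) μ :=
    (slice_continuous s).integrable_of_hasCompactSupport (.intro hK (hsupp s))
  have slice_differentiable (x : E) : Differentiable ℝ fun s => f s x :=
    (hf.comp (contDiff_prodMk_left x)).differentiable one_ne_zero
  have deriv_eq_zero (s : ℝ) : ∀ x ∉ K, deriv (fun r => f r x) s = 0 := fun x hx => by
    simp only [hsupp _ x hx, deriv_const]
  have deriv_continuous := continuous_uncurry_deriv_left hf
  have deriv_integrable : Integrable (fun x => deriv (fun s => f s x) t) μ :=
    (deriv_continuous.comp (.prodMk_right t)).integrable_of_hasCompactSupport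
      (.intro hK (deriv_eq_zero t))
  obtain ⟨C, hC⟩ := ((isCompact_Icc (a := t - 1) (b := t + 1)).prod hK).exists_bound_of_continuousOn
    deriv_continuous.continuousOn
  refine (hasDerivAt_integral_of_dominated_loc_of_deriv_le (bound := K.indicator fun _ => C)
    (Icc_mem_nhds (sub_one_lt t) (lt_add_one t))
    (.of_forall fun s => (slice_integrable s).aestronglyMeasurable) (slice_integrable t)
    deriv_integrable.aestronglyMeasurable (.of_forall fun x s hs => ?_)
    ((integrable_indicator_iff hK.measurableSet).2 (integrableOn_const hK.measure_lt_top.ne))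
    (.of_forall fun x s _ => (slice_differentiable x s).hasDerivAt)).2
  by_cases hx : x ∈ K
  · simpa only [Set.indicator_of_mem hx] using hC (s, x) ⟨hs, hx⟩
  · simp only [deriv_eq_zero s x hx, norm_zero, Set.indicator_of_notMem hx, le_refl]

end Calculus

section PartialDerivatives

variable {f h : (Fin 2 → ℝ) → ℝ} {n : WithTop ℕ∞} {x : Fin 2 → ℝ}

theorem contDiff_pd2 (hf : ContDiff ℝ (n + 1) f) (i : Fin 2) : ContDiff ℝ n (pd2 i f) :=
  (hf.fderiv_right le_rfl).clm_apply contDiff_const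

theorem contDiff_lap2 (hf : ContDiff ℝ (n + 2) f) : ContDiff ℝ n (lap2 f) := by
  have hf' : ContDiff ℝ (n + 1 + 1) f := by rwa [add_assoc, one_add_one_eq_two]
  exact (contDiff_pd2 (contDiff_pd2 hf' 0) 0).add (contDiff_pd2 (contDiff_pd2 hf' 1) 1)

theorem pd2_mul (hf : DifferentiableAt ℝ f x) (hh : DifferentiableAt ℝ h x) (i : Fin 2) :
    pd2 i (fun y => f y * h y) x = f x * pd2 i h x + h x * pd2 i f x := by
  simp only [pd2, fderiv_fun_mul hf hh, add_apply, smul_apply, smul_eq_mul]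

theorem pd2_neg (f : (Fin 2 → ℝ) → ℝ) (x : Fin 2 → ℝ) (i : Fin 2) :
    pd2 i (fun y => -f y) x = -pd2 i f x := by
  simp only [pd2, fderiv_fun_neg, neg_apply]

theorem pd2_comp {g : ℝ → ℝ} (hg : DifferentiableAt ℝ g (f x)) (hf : DifferentiableAt ℝ f x)
    (i : Fin 2) : pd2 i (fun y => g (f y)) x = deriv g (f x) * pd2 i f x := by
  have chain : fderiv ℝ (fun y => g (f y)) x = deriv g (f x) • fderiv ℝ f x :=
    (hg.hasDerivAt.comp_hasFDerivAt x hf.hasFDerivAt).fderiv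
  simp only [pd2, chain, smul_apply, smul_eq_mul]

theorem pd2_comm (hf : ContDiffAt ℝ 2 f x) (i j : Fin 2) :
    pd2 i (pd2 j f) x = pd2 j (pd2 i f) x := by
  have fderiv_differentiable : DifferentiableAt ℝ (fderiv ℝ f) x :=
    (hf.fderiv_right (m := 1) one_add_one_eq_two.le).differentiableAt one_ne_zero
  have pd2_pd2 (i j : Fin 2) : pd2 i (pd2 j f) x =
      fderiv ℝ (fderiv ℝ f) x (Pi.single i 1) (Pi.single j 1) := by
    have hasFDerivAt_pd2 := fderiv_differentiable.hasFDerivAt.clm_apply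
      (hasFDerivAt_const (Pi.single j (1 : ℝ) : Fin 2 → ℝ) x)
    rw [pd2, show fderiv ℝ (pd2 j f) x = _ from hasFDerivAt_pd2.fderiv]
    simp
  rw [pd2_pd2, pd2_pd2]
  exact (hf.isSymmSndFDerivAt (by simp)).eq _ _

end PartialDerivatives

section Divergence

variable {F : (Fin 2 → ℝ) → (Fin 2 → ℝ)}

theorem integrable_div2 (hF : ContDiff ℝ 1 F) (hc : HasCompactSupport F) : Integrable (div2 F) :=
  integrable_finsetSum _ fun i _ => integrable_fderiv_apply_of_hasCompactSupport
    (contDiff_pi.1 hF i) (hc.comp_left (g := fun v : Fin 2 → ℝ => v i) rfl) _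

theorem integral_div2_eq_zero (hF : ContDiff ℝ 1 F) (hc : HasCompactSupport F) :
    ∫ x, div2 F x = 0 := by
  have hFi (i : Fin 2) : ContDiff ℝ 1 fun y => F y i := contDiff_pi.1 hF i
  have hci (i : Fin 2) : HasCompactSupport fun y => F y i :=
    hc.comp_left (g := fun v : Fin 2 → ℝ => v i) rfl
  simp only [div2, pd2]
  rw [integral_finsetSum _ fun i _ =>
    integrable_fderiv_apply_of_hasCompactSupport (hFi i) (hci i) _]
  exact Finset.sum_eq_zero fun i _ =>
    integral_fderiv_apply_eq_zero_of_hasCompactSupport (hFi i) (hci i) _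

end Divergence

section Bracket

variable {a b w p : (Fin 2 → ℝ) → ℝ} {x : Fin 2 → ℝ}

theorem jbr_self (a : (Fin 2 → ℝ) → ℝ) (x : Fin 2 → ℝ) : jbr a a x = 0 := by
  simp only [jbr]; ring

theorem jbr_swap (a b : (Fin 2 → ℝ) → ℝ) (x : Fin 2 → ℝ) : jbr b a x = -jbr a b x := by
  simp only [jbr]; ring

theorem jbr_mul_comp_right (a : (Fin 2 → ℝ) → ℝ) {g : ℝ → ℝ} (hg : DifferentiableAt ℝ g (p x))
    (hw : DifferentiableAt ℝ w x) (hp : DifferentiableAt ℝ p x) :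
    jbr a (fun y => w y * g (p y)) x =
      g (p x) * jbr a w x + w x * deriv g (p x) * jbr a p x := by
  have hgp : DifferentiableAt ℝ (fun y => g (p y)) x := hg.comp x hp
  simp only [jbr, pd2_mul hw hgp, pd2_comp hg hp]
  ring

/-- The Hamiltonian vector field `(∂_y a, -∂ₓ a)` of `a`, along which `{a, ·}` differentiates. -/
noncomputable def hamiltonianField (a : (Fin 2 → ℝ) → ℝ) (x : Fin 2 → ℝ) : Fin 2 → ℝ :=
  ![pd2 1 a x, -pd2 0 a x]

theorem contDiff_hamiltonianField {n : WithTop ℕ∞} (ha : ContDiff ℝ (n + 1) a) :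
    ContDiff ℝ n (hamiltonianField a) := by
  refine contDiff_pi.2 fun i => ?_
  fin_cases i
  exacts [contDiff_pd2 ha 1, (contDiff_pd2 ha 0).neg]

theorem hasCompactSupport_hamiltonianField (hc : HasCompactSupport a) :
    HasCompactSupport (hamiltonianField a) :=
  (hc.fderiv ℝ).comp_left
    (g := fun L : (Fin 2 → ℝ) →L[ℝ] ℝ => ![L (Pi.single 1 1), -L (Pi.single 0 1)]) (by simp)

theorem jbr_eq_div2 (ha : ContDiff ℝ 2 a) (hb : Differentiable ℝ b) :
    jbr a b = div2 (b • hamiltonianField a) := by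
  ext x
  have hda (i : Fin 2) : DifferentiableAt ℝ (pd2 i a) x :=
    (contDiff_pd2 (n := 1) (by rwa [one_add_one_eq_two]) i).differentiable one_ne_zero x
  have field_zero : (fun y => (b • hamiltonianField a) y 0) = fun y => b y * pd2 1 a y := rfl
  have field_one : (fun y => (b • hamiltonianField a) y 1) = fun y => b y * -pd2 0 a y := rfl
  rw [div2, Fin.sum_univ_two, field_zero, field_one, pd2_mul (hb x) (hda 1),
    pd2_mul (hb x) (hda 0).fun_neg, pd2_neg, pd2_comm ha.contDiffAt 0 1, jbr]
  ring

theorem contDiff_smul_hamiltonianField (ha : ContDiff ℝ 2 a) (hb : ContDiff ℝ 1 b) :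
    ContDiff ℝ 1 (b • hamiltonianField a) :=
  hb.smul (contDiff_hamiltonianField (by rwa [one_add_one_eq_two]))

theorem hasCompactSupport_smul_hamiltonianField (hc : HasCompactSupport a ∨ HasCompactSupport b) :
    HasCompactSupport (b • hamiltonianField a) :=
  hc.elim (fun ha => (hasCompactSupport_hamiltonianField ha).smul_left) fun hb => hb.smul_right

theorem integrable_jbr (ha : ContDiff ℝ 2 a) (hb : ContDiff ℝ 1 b)
    (hc : HasCompactSupport a ∨ HasCompactSupport b) : Integrable (jbr a b) := by
  rw [jbr_eq_div2 ha (hb.differentiable one_ne_zero)]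
  exact integrable_div2 (contDiff_smul_hamiltonianField ha hb)
    (hasCompactSupport_smul_hamiltonianField hc)

theorem integral_jbr_eq_zero (ha : ContDiff ℝ 2 a) (hb : ContDiff ℝ 1 b)
    (hc : HasCompactSupport a ∨ HasCompactSupport b) : ∫ x, jbr a b x = 0 := by
  rw [jbr_eq_div2 ha (hb.differentiable one_ne_zero)]
  exact integral_div2_eq_zero (contDiff_smul_hamiltonianField ha hb)
    (hasCompactSupport_smul_hamiltonianField hc)

end Bracket

section Casimir

variable {ω ψ φ j : ℝ → (Fin 2 → ℝ) → ℝ} {g : ℝ → ℝ}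

theorem deriv_mul_comp_eq_neg_jbr_sub_jbr {t : ℝ} {x : Fin 2 → ℝ}
    (hω : DifferentiableAt ℝ (Function.uncurry ω) (t, x))
    (hψ : DifferentiableAt ℝ (Function.uncurry ψ) (t, x))
    (hj : DifferentiableAt ℝ (j t) x) (hg : DifferentiableAt ℝ g (ψ t x))
    (hωeq : deriv (fun τ => ω τ x) t + jbr (φ t) (ω t) x = jbr (j t) (ψ t) x)
    (hψeq : deriv (fun τ => ψ τ x) t + jbr (φ t) (ψ t) x = 0) :
    deriv (fun τ => ω τ x * g (ψ τ x)) t =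
      -jbr (ψ t) (fun y => j t y * g (ψ t y)) x - jbr (φ t) (fun y => ω t y * g (ψ t y)) x := by
  have time_slice {f : ℝ → (Fin 2 → ℝ) → ℝ} (hf : DifferentiableAt ℝ (Function.uncurry f) (t, x)) :
      HasDerivAt (fun τ => f τ x) (deriv (fun τ => f τ x) t) t :=
    (hf.comp (f := fun τ => (τ, x)) t (by fun_prop)).hasDerivAt
  have space_slice {f : ℝ → (Fin 2 → ℝ) → ℝ}
      (hf : DifferentiableAt ℝ (Function.uncurry f) (t, x)) : DifferentiableAt ℝ (f t) x :=
    hf.comp (f := fun y => (t, y)) x (by fun_prop)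
  have product_rule : deriv (fun τ => ω τ x * g (ψ τ x)) t = deriv (fun τ => ω τ x) t * g (ψ t x) +
      ω t x * (deriv g (ψ t x) * deriv (fun τ => ψ τ x) t) :=
    ((time_slice hω).mul (hg.hasDerivAt.comp t (time_slice hψ))).deriv
  rw [product_rule, jbr_mul_comp_right _ hg (space_slice hω) (space_slice hψ),
    jbr_mul_comp_right _ hg hj (space_slice hψ), jbr_self, jbr_swap (j t) (ψ t)]
  linear_combination g (ψ t x) * hωeq + ω t x * deriv g (ψ t x) * hψeq

theorem integral_deriv_mul_comp_eq_zero {t : ℝ}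
    (hω : ContDiff ℝ 1 (Function.uncurry ω)) (hψ : ContDiff ℝ 1 (Function.uncurry ψ))
    (hψt : ContDiff ℝ 2 (ψ t)) (hφt : ContDiff ℝ 2 (φ t)) (hj : ContDiff ℝ 1 (j t))
    (hωc : HasCompactSupport (ω t)) (hψc : HasCompactSupport (ψ t))
    (hωeq : ∀ x, deriv (fun τ => ω τ x) t + jbr (φ t) (ω t) x = jbr (j t) (ψ t) x)
    (hψeq : ∀ x, deriv (fun τ => ψ τ x) t + jbr (φ t) (ψ t) x = 0) (hg : ContDiff ℝ 1 g) :
    ∫ x, deriv (fun τ => ω τ x * g (ψ τ x)) t = 0 := by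
  have current_contDiff : ContDiff ℝ 1 fun y => j t y * g (ψ t y) :=
    hj.mul (hg.comp (hψt.of_le one_le_two))
  have density_contDiff : ContDiff ℝ 1 fun y => ω t y * g (ψ t y) :=
    (hω.mul (hg.comp hψ)).comp (contDiff_prodMk_right t)
  have density_compact : HasCompactSupport fun y => ω t y * g (ψ t y) := hωc.mul_right
  calc ∫ x, deriv (fun τ => ω τ x * g (ψ τ x)) t
    _ = ∫ x, (-jbr (ψ t) (fun y => j t y * g (ψ t y)) x -
          jbr (φ t) (fun y => ω t y * g (ψ t y)) x) := integral_congr_ae <| .of_forall fun x =>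
        deriv_mul_comp_eq_neg_jbr_sub_jbr (hω.differentiable one_ne_zero _)
          (hψ.differentiable one_ne_zero _) (hj.differentiable one_ne_zero x)
          (hg.differentiable one_ne_zero _) (hωeq x) (hψeq x)
    _ = -(∫ x, jbr (ψ t) (fun y => j t y * g (ψ t y)) x) -
          ∫ x, jbr (φ t) (fun y => ω t y * g (ψ t y)) x := by
        rw [← integral_neg]
        exact integral_sub (integrable_jbr hψt current_contDiff (.inl hψc)).neg
          (integrable_jbr hφt density_contDiff (.inr density_compact))
    _ = 0 := by
        rw [integral_jbr_eq_zero hψt current_contDiff (.inl hψc),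
          integral_jbr_eq_zero hφt density_contDiff (.inr density_compact), neg_zero, sub_zero]

/-- The field `j` takes the place of the current density `Δψ`. -/
theorem reduced_MHD_casimir_constant_general
    (hω : ContDiff ℝ 1 (Function.uncurry ω)) (hψ : ContDiff ℝ 1 (Function.uncurry ψ))
    (hψt : ∀ t, ContDiff ℝ 2 (ψ t)) (hφt : ∀ t, ContDiff ℝ 2 (φ t)) (hjt : ∀ t, ContDiff ℝ 1 (j t))
    {K : Set (Fin 2 → ℝ)} (hK : IsCompact K) (hωsupp : ∀ t, ∀ x ∉ K, ω t x = 0)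
    (hψsupp : ∀ t, HasCompactSupport (ψ t))
    (hωeq : ∀ t x, deriv (fun τ => ω τ x) t + jbr (φ t) (ω t) x = jbr (j t) (ψ t) x)
    (hψeq : ∀ t x, deriv (fun τ => ψ τ x) t + jbr (φ t) (ψ t) x = 0)
    (hg : ContDiff ℝ 1 g) (t₁ t₂ : ℝ) :
    ∫ x, ω t₁ x * g (ψ t₁ x) = ∫ x, ω t₂ x * g (ψ t₂ x) := by
  have density_contDiff : ContDiff ℝ 1 (Function.uncurry fun t x => ω t x * g (ψ t x)) :=
    hω.mul (hg.comp hψ)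
  have density_supp (t : ℝ) : ∀ x ∉ K, ω t x * g (ψ t x) = 0 := fun x hx => by
    rw [hωsupp t x hx, zero_mul]
  have hasDerivAt_zero (t : ℝ) : HasDerivAt (fun s => ∫ x, ω s x * g (ψ s x)) 0 t :=
    integral_deriv_mul_comp_eq_zero hω hψ (hψt t) (hφt t) (hjt t) (.intro hK (hωsupp t))
      (hψsupp t) (hωeq t) (hψeq t) hg ▸
        hasDerivAt_integral_of_contDiff_of_isCompact density_contDiff hK density_supp t
  exact is_const_of_deriv_eq_zero (fun t => (hasDerivAt_zero t).differentiableAt)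
    (fun t => (hasDerivAt_zero t).deriv) t₁ t₂

end Casimir

/-- For the reduced MHD system `∂ₜω + {φ,ω} = {Δψ,ψ}`, `∂ₜψ + {φ,ψ} = 0`,
the Casimir `∫ ω g(ψ)` is a constant of motion for every smooth `g`. -/
theorem reduced_MHD_casimir_constant
    (ω ψ φ : ℝ → (Fin 2 → ℝ) → ℝ)
    (hω : ContDiff ℝ (⊤ : ℕ∞) (fun p : ℝ × (Fin 2 → ℝ) => ω p.1 p.2))
    (hψ : ContDiff ℝ (⊤ : ℕ∞) (fun p : ℝ × (Fin 2 → ℝ) => ψ p.1 p.2))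
    (hφ : ContDiff ℝ (⊤ : ℕ∞) (fun p : ℝ × (Fin 2 → ℝ) => φ p.1 p.2))
    (K : Set (Fin 2 → ℝ)) (hK : IsCompact K)
    (hωsupp : ∀ t x, x ∉ K → ω t x = 0)
    (hψsupp : ∀ t x, x ∉ K → ψ t x = 0)
    (hωeq : ∀ t x, deriv (fun τ => ω τ x) t + jbr (φ t) (ω t) x =
      jbr (fun y => lap2 (ψ t) y) (ψ t) x)
    (hψeq : ∀ t x, deriv (fun τ => ψ τ x) t + jbr (φ t) (ψ t) x = 0)
    (g : ℝ → ℝ) (hg : ContDiff ℝ (⊤ : ℕ∞) g) :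
    ∀ t₁ t₂ : ℝ,
      (∫ x : Fin 2 → ℝ, ω t₁ x * g (ψ t₁ x)) =
        ∫ x : Fin 2 → ℝ, ω t₂ x * g (ψ t₂ x) := by
  have hψt (t : ℝ) : ContDiff ℝ (⊤ : ℕ∞) (ψ t) := hψ.comp (contDiff_prodMk_right t)
  have hφt (t : ℝ) : ContDiff ℝ (⊤ : ℕ∞) (φ t) := hφ.comp (contDiff_prodMk_right t)
  exact reduced_MHD_casimir_constant_general (hω.of_le (mod_cast le_top))
    (hψ.of_le (mod_cast le_top)) (fun t => contDiff_infty.1 (hψt t) 2)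
    (fun t => contDiff_infty.1 (hφt t) 2)
    (fun t => contDiff_lap2 (contDiff_infty.1 (hψt t) 3)) hK hωsupp
    (fun t => .intro hK (hψsupp t)) hωeq hψeq (hg.of_le (mod_cast le_top))
end
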